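/- arXiv:1003.1544 — 3 statements merged into one kernel-verified Lean document; each statement's English description precedes it below -/
import Mathlib

section
/- Let R be a ring and a an invertible (n+1)×(n+1) matrix over R indexed by Fin (n+1), with two-sided inverse a⁻¹. Fix indices i, j : Fin (n+1), and let m be the n×n matrix obtained from a by deleting row i and column j, i.e. m k l = a (i.succAbove k) (j.succAbove l); assume m is invertible with two-sided inverse N. Then the entry of a⁻¹ in row j, column i is a unit of R, and its inverse (the (i,j)-quasideterminant of a) equals a i j − Σ_{k,l ∈ Fin n} a i (j.succAbove k) * N k l * a (i.succAbove l) j. -/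
/-!
Write `a`, up to the position of row `i` and column `j`, in blocks: the corner `d = a i j`, the
rest `r` of row `i`, the rest `c` of column `j`, and the minor `M` with inverse `N`. Likewise
let `x = a' j i`, and let `v` and `u` be the rest of column `i` and of row `j` of `a'`.
Column `i` of `a * a' = 1` says `d x + r v = 1` and `c x + M v = 0`; hence `v = -N c x` and
`(d - r N c) x = 1`. Row `j` of `a' * a = 1` gives `u = -x r N` and `x (d - r N c) = 1` in the
same way.
-/

/-- Quasideterminant: if `a` is an invertible `(n+1)×(n+1)` matrix over a ring `R` with
two-sided inverse `a'`, and the minor of `a` obtained by deleting row `i` and column `j`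
has a two-sided inverse `N`, then the entry `a' j i` of the inverse matrix is a unit of `R`
whose inverse (the `(i,j)`-quasideterminant of `a`) equals
`a i j - ∑ k l, a i (j.succAbove k) * N k l * a (i.succAbove l) j`. -/
theorem stmt1 {R : Type*} [Ring R] {n : ℕ}
    (a a' : Matrix (Fin (n + 1)) (Fin (n + 1)) R)
    (ha₁ : a * a' = 1) (ha₂ : a' * a = 1)
    (i j : Fin (n + 1)) (N : Matrix (Fin n) (Fin n) R)
    (hm₁ : (Matrix.of fun k l => a (i.succAbove k) (j.succAbove l)) * N = 1)
    (hm₂ : N * (Matrix.of fun k l => a (i.succAbove k) (j.succAbove l)) = 1) :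
    IsUnit (a' j i) ∧
    a' j i * (a i j - ∑ k : Fin n, ∑ l : Fin n,
        a i (j.succAbove k) * N k l * a (i.succAbove l) j) = 1 ∧
    (a i j - ∑ k : Fin n, ∑ l : Fin n,
        a i (j.succAbove k) * N k l * a (i.succAbove l) j) * a' j i = 1 := by
  set M : Matrix (Fin n) (Fin n) R := Matrix.of fun k l => a (i.succAbove k) (j.succAbove l)
  have right : (a i j - ∑ k : Fin n, ∑ l : Fin n,
      a i (j.succAbove k) * N k l * a (i.succAbove l) j) * a' j i = 1 := by
    have corner : a i j * a' j i + ∑ k, a i (j.succAbove k) * a' (j.succAbove k) i = 1 := by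
      have h := congrFun (congrFun ha₁ i) i
      rwa [Matrix.mul_apply, Fin.sum_univ_succAbove _ j, Matrix.one_apply_eq] at h
    have hMv : M.mulVec (fun k => a' (j.succAbove k) i)
        = fun l => -(a (i.succAbove l) j * a' j i) := by
      funext l
      have h := congrFun (congrFun ha₁ (i.succAbove l)) i
      rw [Matrix.mul_apply, Fin.sum_univ_succAbove _ j,
        Matrix.one_apply_ne (Fin.succAbove_ne i l)] at h
      exact eq_neg_of_add_eq_zero_right h
    have hv : ∀ k, a' (j.succAbove k) i = -∑ l, N k l * (a (i.succAbove l) j * a' j i) := by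
      intro k
      have h := congrFun (congrArg N.mulVec hMv) k
      rw [Matrix.mulVec_mulVec, hm₂, Matrix.one_mulVec] at h
      simpa [Matrix.mulVec, dotProduct] using h
    simp only [hv, mul_neg, Finset.sum_neg_distrib, Finset.mul_sum] at corner
    simpa only [sub_mul, Finset.sum_mul, mul_assoc, ← sub_eq_add_neg] using corner
  have left : a' j i * (a i j - ∑ k : Fin n, ∑ l : Fin n,
      a i (j.succAbove k) * N k l * a (i.succAbove l) j) = 1 := by
    have corner : a' j i * a i j + ∑ l, a' j (i.succAbove l) * a (i.succAbove l) j = 1 := by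
      have h := congrFun (congrFun ha₂ j) j
      rwa [Matrix.mul_apply, Fin.sum_univ_succAbove _ i, Matrix.one_apply_eq] at h
    have huM : Matrix.vecMul (fun l => a' j (i.succAbove l)) M
        = fun k => -(a' j i * a i (j.succAbove k)) := by
      funext k
      have h := congrFun (congrFun ha₂ j) (j.succAbove k)
      rw [Matrix.mul_apply, Fin.sum_univ_succAbove _ i,
        Matrix.one_apply_ne (Fin.succAbove_ne j k).symm] at h
      exact eq_neg_of_add_eq_zero_right h
    have hu : ∀ l, a' j (i.succAbove l) = -∑ k, a' j i * a i (j.succAbove k) * N k l := by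
      intro l
      have h := congrFun (congrArg (fun w => Matrix.vecMul w N) huM) l
      simp only [Matrix.vecMul_vecMul, hm₁, Matrix.vecMul_one] at h
      simpa [Matrix.vecMul, dotProduct] using h
    simp only [hu, neg_mul, Finset.sum_neg_distrib, Finset.sum_mul] at corner
    rw [Finset.sum_comm] at corner
    simpa only [mul_sub, Finset.mul_sum, mul_assoc, ← sub_eq_add_neg] using corner
  exact ⟨⟨⟨_, _, left, right⟩, rfl⟩, left, right⟩
end

section
/- Let ℍ be the quaternion algebra over ℝ with basis (e₀, e₁, e₂, e₃) = (1, i, j, k), let c : Fin 4 → Fin 4 → ℝ, and define f : ℍ → ℍ by f x = Σ_{k,r ∈ Fin 4} c k r • (e k * x * e r). Write f_l^m for the m-th real coordinate of f (e l) (so f_l^0 = (f (e l)).re, f_l^1 = (f (e l)).imI, f_l^2 = (f (e l)).imJ, f_l^3 = (f (e l)).imK). Then the sixteen coefficients are recovered from the coordinates of f by: 4c₀₀ = f₀⁰+f₁¹+f₂²+f₃³; 4c₁₁ = −f₀⁰−f₁¹+f₂²+f₃³; 4c₂₂ = −f₀⁰+f₁¹−f₂²+f₃³; 4c₃₃ =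 −f₀⁰+f₁¹+f₂²−f₃³; 4c₁₀ = −f₁⁰+f₀¹−f₃²+f₂³; 4c₀₁ = −f₁⁰+f₀¹+f₃²−f₂³; 4c₃₂ = −f₁⁰−f₀¹−f₃²−f₂³; 4c₂₃ = f₁⁰+f₀¹−f₃²−f₂³; 4c₂₀ = −f₂⁰+f₃¹+f₀²−f₁³; 4c₃₁ = f₂⁰−f₃¹+f₀²−f₁³; 4c₀₂ = −f₂⁰−f₃¹+f₀²+f₁³; 4c₁₃ = −f₂⁰−f₃¹−f₀²−f₁³; 4c₃₀ = −f₃⁰−f₂¹+f₁²+f₀³; 4c₂₁ = −f₃⁰−f₂¹−f₁²−f₀³; 4c₁₂ = f₃⁰−f₂¹−f₁²+f₀³; 4c₀₃ = −f₃⁰+f₂¹−f₁²+f₀³. -/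
/-!
Since `e k * e l * e r` is always plus or minus a basis vector, each coordinate `f_l^m` is a sum of
four of the `c k r` with signs. The resulting 16 × 16 linear system splits into four blocks, each a
4 × 4 sign matrix with orthogonal rows, so its inverse is a quarter of its transpose; this is what
the sixteen formulas express. The lemmas `eQ_re`, `eQ_imI`, `eQ_imJ`, `eQ_imK` give the coordinates
of the basis vectors, from which those of `f (e l)` are computed.
-/

/-- The standard real basis `(1, i, j, k)` of the quaternion algebra. -/
noncomputable def eQ : Fin 4 → Quaternion ℝ :=
  ![1, ⟨0, 1, 0, 0⟩, ⟨0, 0, 1, 0⟩, ⟨0, 0, 0, 1⟩]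

theorem eQ_re (l : Fin 4) : (eQ l).re = if l = 0 then 1 else 0 := by
  fin_cases l <;> simp [eQ] <;> rfl

theorem eQ_imI (l : Fin 4) : (eQ l).imI = if l = 1 then 1 else 0 := by
  fin_cases l <;> simp [eQ] <;> rfl

theorem eQ_imJ (l : Fin 4) : (eQ l).imJ = if l = 2 then 1 else 0 := by
  fin_cases l <;> simp [eQ] <;> rfl

theorem eQ_imK (l : Fin 4) : (eQ l).imK = if l = 3 then 1 else 0 := by
  fin_cases l <;> simp [eQ] <;> rfl

/-- The standard components `c k r` of the map `f x = ∑ k r, c k r • (e k * x * e r)` on the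
quaternion algebra are recovered from the coordinates `f_l^m` of `f` relative to the basis
`(1, i, j, k)`, where `f_l^m` is the `m`-th real coordinate of `f (e l)`. -/
theorem stmt16 (c : Fin 4 → Fin 4 → ℝ) :
    let g : Fin 4 → Quaternion ℝ :=
      fun l => ∑ k : Fin 4, ∑ r : Fin 4, c k r • (eQ k * eQ l * eQ r)
    4 * c 0 0 = (g 0).re + (g 1).imI + (g 2).imJ + (g 3).imK ∧
    4 * c 1 1 = -(g 0).re - (g 1).imI + (g 2).imJ + (g 3).imK ∧
    4 * c 2 2 = -(g 0).re + (g 1).imI - (g 2).imJ + (g 3).imK ∧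
    4 * c 3 3 = -(g 0).re + (g 1).imI + (g 2).imJ - (g 3).imK ∧
    4 * c 1 0 = -(g 1).re + (g 0).imI - (g 3).imJ + (g 2).imK ∧
    4 * c 0 1 = -(g 1).re + (g 0).imI + (g 3).imJ - (g 2).imK ∧
    4 * c 3 2 = -(g 1).re - (g 0).imI - (g 3).imJ - (g 2).imK ∧
    4 * c 2 3 = (g 1).re + (g 0).imI - (g 3).imJ - (g 2).imK ∧
    4 * c 2 0 = -(g 2).re + (g 3).imI + (g 0).imJ - (g 1).imK ∧
    4 * c 3 1 = (g 2).re - (g 3).imI + (g 0).imJ - (g 1).imK ∧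
    4 * c 0 2 = -(g 2).re - (g 3).imI + (g 0).imJ + (g 1).imK ∧
    4 * c 1 3 = -(g 2).re - (g 3).imI - (g 0).imJ - (g 1).imK ∧
    4 * c 3 0 = -(g 3).re - (g 2).imI + (g 1).imJ + (g 0).imK ∧
    4 * c 2 1 = -(g 3).re - (g 2).imI - (g 1).imJ - (g 0).imK ∧
    4 * c 1 2 = (g 3).re - (g 2).imI - (g 1).imJ + (g 0).imK ∧
    4 * c 0 3 = -(g 3).re + (g 2).imI - (g 1).imJ + (g 0).imK := by
  intro g
  -- Each of the sixteen coordinates `f_l^m` is a signed sum of four of the `c k r`, because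
  -- `e k * e l * e r` is plus or minus a basis vector.
  have h0 : g 0 = ⟨c 0 0 - c 1 1 - c 2 2 - c 3 3, c 0 1 + c 1 0 + c 2 3 - c 3 2,
      c 0 2 + c 2 0 + c 3 1 - c 1 3, c 0 3 + c 3 0 + c 1 2 - c 2 1⟩ := by
    ext <;> simp [g, Fin.sum_univ_four, eQ_re, eQ_imI, eQ_imJ, eQ_imK] <;> ring
  have h1 : g 1 = ⟨-c 0 1 - c 1 0 + c 2 3 - c 3 2, c 0 0 - c 1 1 + c 2 2 + c 3 3,
      c 3 0 - c 0 3 - c 1 2 - c 2 1, c 0 2 - c 2 0 - c 1 3 - c 3 1⟩ := by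
    ext <;> simp [g, Fin.sum_univ_four, eQ_re, eQ_imI, eQ_imJ, eQ_imK] <;> ring
  have h2 : g 2 = ⟨-c 0 2 - c 2 0 + c 3 1 - c 1 3, c 0 3 - c 3 0 - c 1 2 - c 2 1,
      c 0 0 + c 1 1 - c 2 2 + c 3 3, c 1 0 - c 0 1 - c 2 3 - c 3 2⟩ := by
    ext <;> simp [g, Fin.sum_univ_four, eQ_re, eQ_imI, eQ_imJ, eQ_imK] <;> ring
  have h3 : g 3 = ⟨-c 0 3 - c 3 0 + c 1 2 - c 2 1, c 2 0 - c 0 2 - c 1 3 - c 3 1,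
      c 0 1 - c 1 0 - c 2 3 - c 3 2, c 0 0 + c 1 1 + c 2 2 - c 3 3⟩ := by
    ext <;> simp [g, Fin.sum_univ_four, eQ_re, eQ_imI, eQ_imJ, eQ_imK] <;> ring
  -- Inverting this linear system is a matter of adding up the right-hand sides.
  rw [h0, h1, h2, h3]
  refine ⟨?_, ?_, ?_, ?_, ?_, ?_, ?_, ?_, ?_, ?_, ?_, ?_, ?_, ?_, ?_, ?_⟩ <;> ring
end

section
/- For every ℝ-linear map f : ℍ → ℍ there exists a unique family of real numbers c : Fin 4 → Fin 4 → ℝ such that f x = Σ_{k,r ∈ Fin 4} c k r • (e k * x * e r) for all x ∈ ℍ, where (e₀, e₁, e₂, e₃) = (1, i, j, k). In other words, every ℝ-linear endomorphism of the quaternion algebra is an ℝ-linear combination of the sixteen maps x ↦ e k * x * e r, and these sixteen maps are linearly independent over ℝ. -/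
/-- The linear map sending a coefficient family `c` to the endomorphism
`x ↦ ∑ c k r • (e k * x * e r)` of the quaternions. -/
noncomputable def sandwich :
    (Fin 4 → Fin 4 → ℝ) →ₗ[ℝ] (Quaternion ℝ →ₗ[ℝ] Quaternion ℝ) where
  toFun c := ∑ k : Fin 4, ∑ r : Fin 4, c k r • LinearMap.mulLeftRight ℝ (eQ k, eQ r)
  map_add' c d := by simp only [Pi.add_apply, add_smul, Finset.sum_add_distrib]
  map_smul' a c := by
    simp only [Pi.smul_apply, smul_eq_mul, mul_smul, Finset.smul_sum, RingHom.id_apply]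

lemma sandwich_apply (c : Fin 4 → Fin 4 → ℝ) (x : Quaternion ℝ) :
    sandwich c x = ∑ k : Fin 4, ∑ r : Fin 4, c k r • (eQ k * x * eQ r) := by
  simp [sandwich, LinearMap.sum_apply]

lemma eQ_re_s17 (m : Fin 4) : (eQ m).re = ![1, 0, 0, 0] m := by fin_cases m <;> rfl

lemma eQ_imI_s17 (m : Fin 4) : (eQ m).imI = ![0, 1, 0, 0] m := by fin_cases m <;> rfl

lemma eQ_imJ_s17 (m : Fin 4) : (eQ m).imJ = ![0, 0, 1, 0] m := by fin_cases m <;> rfl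

lemma eQ_imK_s17 (m : Fin 4) : (eQ m).imK = ![0, 0, 0, 1] m := by fin_cases m <;> rfl

lemma sandwich_injective : Function.Injective sandwich := by
  rw [injective_iff_map_eq_zero]
  intro c hc
  have h (x : Quaternion ℝ) :
      ∑ k : Fin 4, ∑ r : Fin 4, c k r • (eQ k * x * eQ r) = 0 := by
    rw [← sandwich_apply, hc, LinearMap.zero_apply]
  have hre x := congrArg QuaternionAlgebra.re (h x)
  have hI x := congrArg QuaternionAlgebra.imI (h x)
  have hJ x := congrArg QuaternionAlgebra.imJ (h x)
  have hK x := congrArg QuaternionAlgebra.imK (h x)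
  simp only [Fin.sum_univ_four, Quaternion.re_add, Quaternion.imI_add, Quaternion.imJ_add,
    Quaternion.imK_add, Quaternion.re_smul, Quaternion.imI_smul, Quaternion.imJ_smul,
    Quaternion.imK_smul, Quaternion.re_mul, Quaternion.imI_mul, Quaternion.imJ_mul,
    Quaternion.imK_mul, Quaternion.re_zero, Quaternion.imI_zero, Quaternion.imJ_zero,
    Quaternion.imK_zero, smul_eq_mul] at hre hI hJ hK
  have a0 := hre (eQ 0)
  have a1 := hre (eQ 1)
  have a2 := hre (eQ 2)
  have a3 := hre (eQ 3)
  have b0 := hI (eQ 0)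
  have b1 := hI (eQ 1)
  have b2 := hI (eQ 2)
  have b3 := hI (eQ 3)
  have c0 := hJ (eQ 0)
  have c1 := hJ (eQ 1)
  have c2 := hJ (eQ 2)
  have c3 := hJ (eQ 3)
  have d0 := hK (eQ 0)
  have d1 := hK (eQ 1)
  have d2 := hK (eQ 2)
  have d3 := hK (eQ 3)
  simp [eQ_re_s17, eQ_imI_s17, eQ_imJ_s17, eQ_imK_s17] at a0 a1 a2 a3 b0 b1 b2 b3 c0 c1 c2 c3 d0 d1 d2 d3
  clear h hre hI hJ hK hc
  ext k r
  fin_cases k <;> fin_cases r <;> simp <;> linarith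

lemma sandwich_bijective : Function.Bijective sandwich := by
  refine ⟨sandwich_injective, ?_⟩
  refine (LinearMap.injective_iff_surjective_of_finrank_eq_finrank ?_).mp sandwich_injective
  simp [Module.finrank_linearMap, Module.finrank_pi_fintype, Quaternion.finrank_eq_four]

/-- Every `ℝ`-linear endomorphism of the quaternion algebra is, in a unique way, an
`ℝ`-linear combination of the sixteen maps `x ↦ e k * x * e r`, where `(e 0, e 1, e 2, e 3)`
is the standard basis `(1, i, j, k)`. -/
theorem stmt17 (f : Quaternion ℝ →ₗ[ℝ] Quaternion ℝ) :
    ∃! c : Fin 4 → Fin 4 → ℝ,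
      ∀ x : Quaternion ℝ, f x = ∑ k : Fin 4, ∑ r : Fin 4, c k r • (eQ k * x * eQ r) := by
  obtain ⟨c, hc, huniq⟩ := sandwich_bijective.existsUnique f
  refine ⟨c, fun x => ?_, fun d hd => huniq d ?_⟩
  · rw [← sandwich_apply, hc]
  · ext1 x
    rw [sandwich_apply, hd]
end
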